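/- (Monotonicity of the weighted spaces in the dimension parameter.) Let m, n ∈ {3,4,5} with m ≥ n and α ∈ (0,1). If Q ∈ 𝔠⁰_{(m)} then Q ∈ 𝔠⁰_{(n)}, and if Q ∈ 𝔠^{0,α}_{(m)} then Q ∈ 𝔠^{0,α}_{(n)}. -/

import Mathlib

open Real Metric ENNReal

noncomputable section

/-- Partial derivative in the first coordinate `ϖ`. -/
def d1 (f : ℝ × ℝ → ℝ) : ℝ × ℝ → ℝ := fun p => fderiv ℝ f p (1, 0)

/-- Partial derivative in the second coordinate `z`. -/
def d3 (f : ℝ × ℝ → ℝ) : ℝ × ℝ → ℝ := fun p => fderiv ℝ f p (0, 1)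

/-- `r = √(ϖ² + z²)`. -/
def rr (p : ℝ × ℝ) : ℝ := Real.sqrt (p.1 ^ 2 + p.2 ^ 2)

/-- The near part `Q^{[0]} = χ(r/R₀)·Q`. -/
def cut0 (χ : ℝ → ℝ) (R₀ : ℝ) (Q : ℝ × ℝ → ℝ) : ℝ × ℝ → ℝ :=
  fun p => χ (rr p / R₀) * Q p

/-- The far part `Q^{[∞]} = (1 − χ(r/R₀))·Q`. -/
def cutInf (χ : ℝ → ℝ) (R₀ : ℝ) (Q : ℝ × ℝ → ℝ) : ℝ × ℝ → ℝ :=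
  fun p => (1 - χ (rr p / R₀)) * Q p

/-- The lift `Q^{♭(n)}(ξ) = Q(a·√(ξ₁²+⋯+ξ_{n−1}²), a·ξₙ)`. -/
def flat (n : ℕ) (a : ℝ) (Q : ℝ × ℝ → ℝ) (ξ : EuclideanSpace ℝ (Fin n)) : ℝ :=
  Q (a * Real.sqrt (∑ i : Fin n, if (i : ℕ) < n - 1 then (ξ i) ^ 2 else 0),
     a * ∑ i : Fin n, if (i : ℕ) = n - 1 then ξ i else 0)

/-- The Kelvin inversion of coordinates (parameter `Ξ₀`). -/
def kelvinPt (n : ℕ) (Ξ₀ : ℝ) (ξ : EuclideanSpace ℝ (Fin n)) : EuclideanSpace ℝ (Fin n) :=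
  ((Ξ₀ / ‖ξ‖) ^ 2 : ℝ) • ξ

/-- The Kelvin transform of a function. -/
def kelvin (n : ℕ) (Ξ₀ : ℝ) (g : EuclideanSpace ℝ (Fin n) → ℝ)
    (ξs : EuclideanSpace ℝ (Fin n)) : ℝ :=
  (Ξ₀ / ‖ξs‖) ^ (n - 2) * g (kelvinPt n Ξ₀ ξs)

/-- The closed ball of radius `Ξ` in `ℝⁿ`. -/
def cb (n : ℕ) (Ξ : ℝ) : Set (EuclideanSpace ℝ (Fin n)) :=
  Metric.closedBall (0 : EuclideanSpace ℝ (Fin n)) Ξ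

/-- `⨆`-style `C^l` norm (values in `ℝ≥0∞`). -/
def cNormE (n l : ℕ) (f : EuclideanSpace ℝ (Fin n) → ℝ) (s : Set (EuclideanSpace ℝ (Fin n))) :
    ℝ≥0∞ :=
  ⨆ i ∈ Finset.range (l + 1), ⨆ x ∈ s,
    (‖iteratedFDerivWithin ℝ i f s x‖₊ : ℝ≥0∞)

/-- Hölder seminorm of the `l`-th derivative (values in `ℝ≥0∞`). -/
def holderSemiE (n l : ℕ) (α : ℝ) (f : EuclideanSpace ℝ (Fin n) → ℝ)
    (s : Set (EuclideanSpace ℝ (Fin n))) : ℝ≥0∞ :=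
  ⨆ x ∈ s, ⨆ y ∈ s, ⨆ (_ : x ≠ y ∧ dist x y ≤ 1),
    (‖iteratedFDerivWithin ℝ l f s x - iteratedFDerivWithin ℝ l f s y‖₊ : ℝ≥0∞) /
      ENNReal.ofReal (dist x y ^ α)

/-- The `C^{l,α}` norm (values in `ℝ≥0∞`). -/
def hNormE (n l : ℕ) (α : ℝ) (f : EuclideanSpace ℝ (Fin n) → ℝ)
    (s : Set (EuclideanSpace ℝ (Fin n))) : ℝ≥0∞ :=
  cNormE n l f s + holderSemiE n l α f s

/-- Membership of an extension in `C^l` on a set. -/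
def MemC (n l : ℕ) (f : EuclideanSpace ℝ (Fin n) → ℝ) (s : Set (EuclideanSpace ℝ (Fin n))) :
    Prop :=
  ContDiffOn ℝ l f s

/-- Membership of an extension in `C^{l,α}` on a set. -/
def MemCHolder (n l : ℕ) (α : ℝ) (f : EuclideanSpace ℝ (Fin n) → ℝ)
    (s : Set (EuclideanSpace ℝ (Fin n))) : Prop :=
  ContDiffOn ℝ l f s ∧ holderSemiE n l α f s < ⊤

/-- Membership of `Q` in the weighted space `𝔠^l_{(n)}` (symmetry in `z` not included). -/
def MemChunk (n l : ℕ) (a Ξ₀ : ℝ) (χ : ℝ → ℝ) (Q : ℝ × ℝ → ℝ) : Prop :=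
  MemC n l (flat n a (cut0 χ (a * Ξ₀) Q)) (cb n (2 * Ξ₀)) ∧
  ∃ h : EuclideanSpace ℝ (Fin n) → ℝ, MemC n l h (cb n Ξ₀) ∧
    Set.EqOn h (kelvin n Ξ₀ (flat n a (cutInf χ (a * Ξ₀) Q))) (cb n Ξ₀ \ {0})

/-- The norm `‖Q; 𝔠^l_{(n)}‖` (values in `ℝ≥0∞`). -/
def chunkNormE (n l : ℕ) (a Ξ₀ : ℝ) (χ : ℝ → ℝ) (Q : ℝ × ℝ → ℝ) : ℝ≥0∞ :=
  max (cNormE n l (flat n a (cut0 χ (a * Ξ₀) Q)) (cb n (2 * Ξ₀)))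
    (⨅ (h : EuclideanSpace ℝ (Fin n) → ℝ)
       (_ : MemC n l h (cb n Ξ₀) ∧
         Set.EqOn h (kelvin n Ξ₀ (flat n a (cutInf χ (a * Ξ₀) Q))) (cb n Ξ₀ \ {0})),
      cNormE n l h (cb n Ξ₀))

/-- Membership of `Q` in the weighted space `𝔠^{l,α}_{(n)}` (symmetry in `z` not included). -/
def MemChunkH (n l : ℕ) (α : ℝ) (a Ξ₀ : ℝ) (χ : ℝ → ℝ) (Q : ℝ × ℝ → ℝ) : Prop :=
  MemCHolder n l α (flat n a (cut0 χ (a * Ξ₀) Q)) (cb n (2 * Ξ₀)) ∧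
  ∃ h : EuclideanSpace ℝ (Fin n) → ℝ, MemCHolder n l α h (cb n Ξ₀) ∧
    Set.EqOn h (kelvin n Ξ₀ (flat n a (cutInf χ (a * Ξ₀) Q))) (cb n Ξ₀ \ {0})

/-- The norm `‖Q; 𝔠^{l,α}_{(n)}‖` (values in `ℝ≥0∞`). -/
def chunkNormHE (n l : ℕ) (α : ℝ) (a Ξ₀ : ℝ) (χ : ℝ → ℝ) (Q : ℝ × ℝ → ℝ) : ℝ≥0∞ :=
  max (hNormE n l α (flat n a (cut0 χ (a * Ξ₀) Q)) (cb n (2 * Ξ₀)))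
    (⨅ (h : EuclideanSpace ℝ (Fin n) → ℝ)
       (_ : MemCHolder n l α h (cb n Ξ₀) ∧
         Set.EqOn h (kelvin n Ξ₀ (flat n a (cutInf χ (a * Ξ₀) Q))) (cb n Ξ₀ \ {0})),
      hNormE n l α h (cb n Ξ₀))

/-!
Padding by zeros in front embeds `ℝⁿ` isometrically into `ℝᵐ` and keeps the last coordinate last,
so `Q^{♭(n)}` is the restriction of `Q^{♭(m)}` and the near part is inherited by composition.
Restricting a Kelvin transform only changes the power of `Ξ₀/|ξ*|`, so the far part in dimension `n`
is `(|ξ*|/Ξ₀)^{m-n}` times the restriction of the one in dimension `m`. This weight is Lipschitz on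
bounded sets, hence harmless for continuity and for Hölder exponents at most `1`; for odd `m - n` it
is not smooth at the origin, so the argument does not extend to all higher derivatives.
-/

open scoped NNReal

section Holder

variable {X A : Type*}

theorem holderOnWith_of_edist_le_one [PseudoEMetricSpace X] [PseudoEMetricSpace A] {C D r : ℝ≥0}
    {f : X → A} {s : Set X}
    (hC : ∀ x ∈ s, ∀ y ∈ s, edist x y ≤ 1 → edist (f x) (f y) ≤ C * edist x y ^ (r : ℝ))
    (hD : ∀ x ∈ s, ∀ y ∈ s, edist (f x) (f y) ≤ D) : HolderOnWith (max C D) r f s := by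
  intro x hx y hy
  rcases le_total (edist x y) 1 with hxy | hxy
  · grw [hC x hx y hy hxy, ← le_max_left C D]
  · calc edist (f x) (f y) ≤ D := hD x hx y hy
      _ = D * 1 ^ (r : ℝ) := by rw [ENNReal.one_rpow, mul_one]
      _ ≤ (max C D : ℝ≥0) * edist x y ^ (r : ℝ) := by
        gcongr
        exact le_max_right C D

theorem holderOnWith_mul_of_nnnorm_le [PseudoEMetricSpace X] [SeminormedRing A]
    {Cf Cg Mf Mg r : ℝ≥0} {f g : X → A} {s : Set X} (hf : HolderOnWith Cf r f s)
    (hg : HolderOnWith Cg r g s) (hMf : ∀ x ∈ s, ‖f x‖₊ ≤ Mf) (hMg : ∀ x ∈ s, ‖g x‖₊ ≤ Mg) :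
    HolderOnWith (Mf * Cg + Cf * Mg) r (fun x => f x * g x) s := by
  intro x hx y hy
  calc edist (f x * g x) (f y * g y)
      = (‖f x * (g x - g y) + (f x - f y) * g y‖₊ : ℝ≥0) := by
        rw [edist_eq_enorm_sub, ← enorm_eq_nnnorm]
        congr 1
        noncomm_ring
    _ ≤ (‖f x‖₊ * ‖g x - g y‖₊ + ‖f x - f y‖₊ * ‖g y‖₊ : ℝ≥0) := by
      grw [nnnorm_add_le, nnnorm_mul_le, nnnorm_mul_le]
    _ = ‖f x‖₊ * edist (g x) (g y) + edist (f x) (f y) * ‖g y‖₊ := by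
      simp only [edist_eq_enorm_sub, enorm_eq_nnnorm, ENNReal.coe_add, ENNReal.coe_mul]
    _ ≤ Mf * (Cg * edist x y ^ (r : ℝ)) + Cf * edist x y ^ (r : ℝ) * Mg := by
      gcongr
      exacts [hMf x hx, hg x hx y hy, hf x hx y hy, hMg y hy]
    _ = (Mf * Cg + Cf * Mg : ℝ≥0) * edist x y ^ (r : ℝ) := by push_cast; ring

theorem exists_nnnorm_le_of_isCompact [TopologicalSpace X] [SeminormedAddCommGroup A]
    {f : X → A} {s : Set X} (hs : IsCompact s) (hf : ContinuousOn f s) :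
    ∃ M : ℝ≥0, ∀ x ∈ s, ‖f x‖₊ ≤ M := by
  obtain ⟨M, hM⟩ := hs.exists_bound_of_continuousOn hf
  exact ⟨M.toNNReal, fun x hx => NNReal.le_toNNReal_of_coe_le (hM x hx)⟩

theorem exists_holderOnWith_mul_of_isCompact [PseudoEMetricSpace X] [SeminormedRing A]
    {r : ℝ≥0} {f g : X → A} {s : Set X} (hs : IsCompact s) (hr : 0 < r)
    (hf : ∃ C, HolderOnWith C r f s) (hg : ∃ C, HolderOnWith C r g s) :
    ∃ C, HolderOnWith C r (fun x => f x * g x) s := by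
  obtain ⟨Cf, hf⟩ := hf
  obtain ⟨Cg, hg⟩ := hg
  obtain ⟨Mf, hMf⟩ := exists_nnnorm_le_of_isCompact hs (hf.continuousOn hr)
  obtain ⟨Mg, hMg⟩ := exists_nnnorm_le_of_isCompact hs (hg.continuousOn hr)
  exact ⟨_, holderOnWith_mul_of_nnnorm_le hf hg hMf hMg⟩

theorem exists_holderOnWith_norm_div_pow [SeminormedAddCommGroup A] {r : ℝ≥0} {s : Set A}
    (hs : IsCompact s) (hr : r ≤ 1) (R : ℝ) (k : ℕ) :
    ∃ C, HolderOnWith C r (fun x => (‖x‖ / R) ^ k) s := by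
  have hpow : LocallyLipschitz fun t : ℝ => (t / R) ^ k :=
    ContDiff.locallyLipschitz (𝕂 := ℝ) (by fun_prop)
  have hnorm : LocallyLipschitz fun x : A => ‖x‖ := lipschitzWith_one_norm.locallyLipschitz
  obtain ⟨K, hK⟩ :=
    (hpow.comp hnorm).locallyLipschitzOn.exists_lipschitzOnWith_of_compact hs
  exact HolderOnWith.exists_holderOnWith_of_le ⟨K, holderOnWith_one.2 hK⟩ hr hs.isBounded

end Holder

section HolderSpace

variable {n : ℕ} {f : EuclideanSpace ℝ (Fin n) → ℝ} {s : Set (EuclideanSpace ℝ (Fin n))}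

theorem memC_zero_iff_continuousOn : MemC n 0 f s ↔ ContinuousOn f s := by
  rw [MemC, Nat.cast_zero, contDiffOn_zero]

theorem holderSemiE_zero_le_iff {α : ℝ} {C : ℝ≥0∞} :
    holderSemiE n 0 α f s ≤ C ↔ ∀ x ∈ s, ∀ y ∈ s, x ≠ y → edist x y ≤ 1 →
      edist (f x) (f y) ≤ C * edist x y ^ α := by
  have hquot : ∀ x y, x ≠ y →
      ((‖iteratedFDerivWithin ℝ 0 f s x - iteratedFDerivWithin ℝ 0 f s y‖₊ : ℝ≥0∞) /
        ENNReal.ofReal (dist x y ^ α) ≤ C ↔ edist (f x) (f y) ≤ C * edist x y ^ α) := by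
    intro x y hxy
    rw [iteratedFDerivWithin_zero_eq_comp, Function.comp_apply, Function.comp_apply, ← map_sub,
      LinearIsometryEquiv.nnnorm_map, ← enorm_eq_nnnorm, ← edist_eq_enorm_sub,
      ← ENNReal.ofReal_rpow_of_pos (dist_pos.2 hxy), ← edist_dist]
    have hpos : edist x y ^ α ≠ 0 := (ENNReal.rpow_pos (edist_pos.2 hxy) (edist_ne_top x y)).ne'
    have htop : edist x y ^ α ≠ ⊤ :=
      ENNReal.rpow_ne_top_of_ne_zero (edist_pos.2 hxy).ne' (edist_ne_top x y)
    exact ENNReal.div_le_iff hpos htop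
  have hdist : ∀ x y : EuclideanSpace ℝ (Fin n), dist x y ≤ 1 ↔ edist x y ≤ 1 := by
    intro x y
    rw [edist_dist, ENNReal.ofReal_le_one]
  simp only [holderSemiE, iSup_le_iff, and_imp, hdist]
  exact forall₂_congr fun x _ => forall₂_congr fun y _ => forall₂_congr fun hne _ => hquot x y hne

theorem memCHolder_zero_iff_exists_holderOnWith {r : ℝ≥0} (hr : 0 < r) (hs : IsCompact s) :
    MemCHolder n 0 r f s ↔ ∃ C, HolderOnWith C r f s := by
  constructor
  · rintro ⟨hcont, hsemi⟩
    obtain ⟨M, hM⟩ := exists_nnnorm_le_of_isCompact hs (memC_zero_iff_continuousOn.1 hcont)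
    obtain ⟨C, hC⟩ := WithTop.ne_top_iff_exists.1 hsemi.ne
    refine ⟨max C (M + M), holderOnWith_of_edist_le_one (fun x hx y hy hxy => ?_)
      fun x hx y hy => ?_⟩
    · rcases eq_or_ne x y with rfl | hne
      · simp only [edist_self, zero_le]
      · exact holderSemiE_zero_le_iff.1 hC.ge x hx y hy hne hxy
    · grw [edist_eq_enorm_sub, enorm_eq_nnnorm, nnnorm_sub_le, hM x hx, hM y hy]
  · rintro ⟨C, hC⟩
    exact ⟨memC_zero_iff_continuousOn.2 (hC.continuousOn hr),
      (holderSemiE_zero_le_iff.2 fun x hx y hy _ _ => hC x hx y hy).trans_lt ENNReal.coe_lt_top⟩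

theorem isCompact_cb (n : ℕ) (R : ℝ) : IsCompact (cb n R) := isCompact_closedBall 0 R

theorem memC_zero_norm_div_pow_mul (hf : MemC n 0 f s) (R : ℝ) (k : ℕ) :
    MemC n 0 (fun x => (‖x‖ / R) ^ k * f x) s := by
  rw [memC_zero_iff_continuousOn] at hf ⊢
  fun_prop

theorem memCHolder_zero_norm_div_pow_mul {α : ℝ} (hα : α ∈ Set.Ioc 0 1) (hs : IsCompact s)
    (hf : MemCHolder n 0 α f s) (R : ℝ) (k : ℕ) :
    MemCHolder n 0 α (fun x => (‖x‖ / R) ^ k * f x) s := by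
  lift α to ℝ≥0 using hα.1.le
  obtain ⟨hpos, hle⟩ : 0 < α ∧ α ≤ 1 := mod_cast hα
  rw [memCHolder_zero_iff_exists_holderOnWith hpos hs] at hf ⊢
  exact exists_holderOnWith_mul_of_isCompact hs hpos
    (exists_holderOnWith_norm_div_pow hs hle R k) hf

end HolderSpace

section LinearIsometry

variable {m n : ℕ} {f : EuclideanSpace ℝ (Fin m) → ℝ}
  (J : EuclideanSpace ℝ (Fin n) →ₗᵢ[ℝ] EuclideanSpace ℝ (Fin m))

theorem mapsTo_cb_of_linearIsometry (R : ℝ) : Set.MapsTo J (cb n R) (cb m R) := fun x hx => by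
  simpa only [cb, mem_closedBall_zero_iff, J.norm_map] using hx

theorem MemC.comp_linearIsometry {l : ℕ} {R : ℝ} (hf : MemC m l f (cb m R)) :
    MemC n l (f ∘ J) (cb n R) :=
  ContDiffOn.comp hf J.contDiff.contDiffOn (mapsTo_cb_of_linearIsometry J R)

theorem MemCHolder.comp_linearIsometry {α R : ℝ} (hf : MemCHolder m 0 α f (cb m R)) :
    MemCHolder n 0 α (f ∘ J) (cb n R) := by
  have hJ := mapsTo_cb_of_linearIsometry J R
  refine ⟨MemC.comp_linearIsometry J hf.1, lt_of_le_of_lt ?_ hf.2⟩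
  refine holderSemiE_zero_le_iff.2 fun x hx y hy hne hxy => ?_
  rw [← J.edist_map] at hxy ⊢
  exact holderSemiE_zero_le_iff.1 le_rfl _ (hJ hx) _ (hJ hy) (J.injective.ne hne) hxy

theorem kelvin_comp_linearIsometry (hn : 2 ≤ n) (hnm : n ≤ m) {R : ℝ} (hR : R ≠ 0)
    {x : EuclideanSpace ℝ (Fin n)} (hx : x ≠ 0) :
    kelvin n R (f ∘ J) x = (‖x‖ / R) ^ (m - n) * kelvin m R f (J x) := by
  have hcancel : (‖x‖ / R) ^ (m - n) * (R / ‖x‖) ^ (m - n) = 1 := by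
    rw [← mul_pow, div_mul_div_cancel₀ hR, div_self (norm_ne_zero_iff.2 hx), one_pow]
  have hexp : m - 2 = (m - n) + (n - 2) := by omega
  simp only [kelvin, kelvinPt, Function.comp_apply, map_smul, J.norm_map]
  rw [hexp, pow_add, ← mul_assoc, ← mul_assoc, hcancel, one_mul]

theorem eqOn_kelvin_comp_linearIsometry (hn : 2 ≤ n) (hnm : n ≤ m) {R : ℝ} (hR : R ≠ 0)
    {h : EuclideanSpace ℝ (Fin m) → ℝ} (hh : Set.EqOn h (kelvin m R f) (cb m R \ {0})) :
    Set.EqOn (fun x => (‖x‖ / R) ^ (m - n) * (h ∘ J) x) (kelvin n R (f ∘ J)) (cb n R \ {0}) := by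
  rintro x ⟨hx, hx0⟩
  have hJx : J x ∈ cb m R \ {0} :=
    ⟨mapsTo_cb_of_linearIsometry J R hx, (map_ne_zero_iff J J.injective).2 hx0⟩
  simp only [kelvin_comp_linearIsometry J hn hnm hR hx0, Function.comp_apply, hh hJx]

end LinearIsometry

/-- The isometric embedding `ℝⁿ → ℝᵏ⁺ⁿ` that inserts `k` zeros in front. The zeros precede the
given coordinates so that the last one, which `flat` treats as the axis variable, stays last. -/
def zeroPad (k n : ℕ) : EuclideanSpace ℝ (Fin n) →ₗᵢ[ℝ] EuclideanSpace ℝ (Fin (k + n)) where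
  toFun x := WithLp.toLp 2 (Fin.append (0 : Fin k → ℝ) x.ofLp)
  map_add' x y := by ext i; cases i using Fin.addCases <;> simp
  map_smul' c x := by ext i; cases i using Fin.addCases <;> simp
  norm_map' x := by simp [EuclideanSpace.norm_eq, Fin.sum_univ_add]

theorem flat_comp_zeroPad (k n : ℕ) (a : ℝ) (Q : ℝ × ℝ → ℝ) :
    flat (k + n) a Q ∘ zeroPad k n = flat n a Q := by
  have hlt (i : Fin n) : k + (i : ℕ) < k + n - 1 ↔ (i : ℕ) < n - 1 := by omega
  have heq (i : Fin n) : k + (i : ℕ) = k + n - 1 ↔ (i : ℕ) = n - 1 := by omega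
  ext x
  simp [flat, zeroPad, Fin.sum_univ_add, hlt, heq]

theorem exists_linearIsometry_flat_comp_eq {m n : ℕ} (hnm : n ≤ m) :
    ∃ J : EuclideanSpace ℝ (Fin n) →ₗᵢ[ℝ] EuclideanSpace ℝ (Fin m),
      ∀ (a : ℝ) (Q : ℝ × ℝ → ℝ), flat m a Q ∘ J = flat n a Q := by
  obtain ⟨k, rfl⟩ := Nat.exists_eq_add_of_le' hnm
  exact ⟨zeroPad k n, flat_comp_zeroPad k n⟩

section Monotonicity

variable {m n : ℕ} {a Ξ₀ : ℝ} {χ : ℝ → ℝ} {Q : ℝ × ℝ → ℝ}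

theorem MemChunk.of_dim_le (hn : 2 ≤ n) (hnm : n ≤ m) (hΞ₀ : Ξ₀ ≠ 0)
    (hQ : MemChunk m 0 a Ξ₀ χ Q) : MemChunk n 0 a Ξ₀ χ Q := by
  obtain ⟨J, hJ⟩ := exists_linearIsometry_flat_comp_eq hnm
  obtain ⟨hnear, h, hh, hfar⟩ := hQ
  rw [MemChunk, ← hJ, ← hJ]
  exact ⟨hnear.comp_linearIsometry J, _,
    memC_zero_norm_div_pow_mul (hh.comp_linearIsometry J) Ξ₀ (m - n),
    eqOn_kelvin_comp_linearIsometry J hn hnm hΞ₀ hfar⟩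

theorem MemChunkH.of_dim_le {α : ℝ} (hn : 2 ≤ n) (hnm : n ≤ m) (hα : α ∈ Set.Ioc 0 1)
    (hΞ₀ : Ξ₀ ≠ 0) (hQ : MemChunkH m 0 α a Ξ₀ χ Q) : MemChunkH n 0 α a Ξ₀ χ Q := by
  obtain ⟨J, hJ⟩ := exists_linearIsometry_flat_comp_eq hnm
  obtain ⟨hnear, h, hh, hfar⟩ := hQ
  rw [MemChunkH, ← hJ, ← hJ]
  exact ⟨hnear.comp_linearIsometry J, _,
    memCHolder_zero_norm_div_pow_mul hα (isCompact_cb n Ξ₀) (hh.comp_linearIsometry J) Ξ₀ (m - n),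
    eqOn_kelvin_comp_linearIsometry J hn hnm hΞ₀ hfar⟩

end Monotonicity

theorem stmt_12_general {m n : ℕ} (hn : 2 ≤ n) (hnm : n ≤ m) {α Ξ₀ : ℝ} (hα : α ∈ Set.Ioc 0 1)
    (hΞ₀ : 0 < Ξ₀) (χ : ℝ → ℝ) (a : ℝ) (Q : ℝ × ℝ → ℝ) :
    (MemChunk m 0 a Ξ₀ χ Q → MemChunk n 0 a Ξ₀ χ Q) ∧
    (MemChunkH m 0 α a Ξ₀ χ Q → MemChunkH n 0 α a Ξ₀ χ Q) :=
  ⟨.of_dim_le hn hnm hΞ₀.ne', .of_dim_le hn hnm hα hΞ₀.ne'⟩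

/-- **Proposition 9 of the paper (monotonicity of the weighted spaces in the dimension
parameter).**  For `m ≥ n` in `{3,4,5}`: `𝔠⁰_{(m)} ⊆ 𝔠⁰_{(n)}` and
`𝔠^{0,α}_{(m)} ⊆ 𝔠^{0,α}_{(n)}`. -/
theorem stmt_12 (m n : ℕ) (hm : m = 3 ∨ m = 4 ∨ m = 5) (hn : n = 3 ∨ n = 4 ∨ n = 5)
    (hmn : n ≤ m) (α Ξ₀ : ℝ) (hα : α ∈ Set.Ioo (0:ℝ) 1) (hΞ₀ : 0 < Ξ₀)
    (χ : ℝ → ℝ) (hχ : ContDiff ℝ (⊤ : ℕ∞) χ) (hχ1 : ∀ t ≤ (1:ℝ), χ t = 1)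
    (hχrange : ∀ t : ℝ, 0 ≤ χ t ∧ χ t ≤ 1) (hχ0 : ∀ t : ℝ, 2 ≤ t → χ t = 0)
    (a : ℝ) (ha : 0 < a) (Q : ℝ × ℝ → ℝ) (hQeven : ∀ ϖ z : ℝ, Q (ϖ, -z) = Q (ϖ, z)) :
    (MemChunk m 0 a Ξ₀ χ Q → MemChunk n 0 a Ξ₀ χ Q) ∧
    (MemChunkH m 0 α a Ξ₀ χ Q → MemChunkH n 0 α a Ξ₀ χ Q) :=
  stmt_12_general (by omega) hmn ⟨hα.1, hα.2.le⟩ hΞ₀ χ a Q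

end
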